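/- arXiv:1508.00050 — 6 statements merged into one kernel-verified Lean document; each statement's English description precedes it below -/
import Mathlib

section
/- For every α ∈ Φ⁺ the following hold: k(α) is a normal pattern in Φ⁺ with α ∉ k(α); rz(k(α)) = {α}; and every normal pattern M ⊆ Φ⁺ with α ∉ M satisfies M ⊆ k(α), i.e., k(α) is the largest normal pattern not containing α. -/
/-!
Write `Φ` for the set of positive roots, `Reach Φ b x` for "`x` is obtained from `b` by repeatedly
adding elements of `Φ` without leaving `Φ`", and let `K` be the set of `b ∈ Φ` from which `a` is not
reachable. Any normal pattern avoiding `a` avoids every element from which `a` is reachable, so `K`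
is the largest normal pattern avoiding `a`. An element `b ≠ a` from which `a` is reachable has a
successor of the same kind, while the successors of `a` are higher than `a` and so lie in `K`; hence
`rz(K) = {a}`. The point is therefore that `k(a) = K` (`kSet_eq_nonReach`). The inclusion `⊆` holds
stage by stage. For `⊇`, the chain `k_i(a)` stabilizes because `Φ` is finite; a `b ∈ K` has all its
successors in `K`, hence, by induction from large height to small, in the stable `k_i(a)`, which
puts `b` into `k_{i+1}(a)`.

Nothing about roots is used except that `Φ` is finite and carries an additive height function that
is positive on it (`RSB.exists_height`).
-/

/-!
Combinatorics of closed patterns in the set of positive roots of a finite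
reduced irreducible crystallographic root system with a fixed base, following
"On the characters of the Sylow p-subgroups of untwisted Chevalley groups".
-/

namespace RSP

variable {V : Type*} [AddCommGroup V]

/-- `S` is a closed pattern (relative to the ambient set `Φ` of positive
roots): for all `a, b ∈ S` with `a + b ∈ Φ` one has `a + b ∈ S`. -/
def ClosedIn (Φ S : Set V) : Prop :=
  ∀ a ∈ S, ∀ b ∈ S, a + b ∈ Φ → a + b ∈ S

/-- `N` is a normal pattern in `Φ`: `N ⊆ Φ` and for all `a ∈ Φ`, `b ∈ N`
with `a + b ∈ Φ` one has `a + b ∈ N`. -/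
def NormalPattern (Φ N : Set V) : Prop :=
  N ⊆ Φ ∧ ∀ a ∈ Φ, ∀ b ∈ N, a + b ∈ Φ → a + b ∈ N

/-- `N` is normal in `S` (relative to `Φ`): for all `a ∈ S`, `b ∈ N` with
`a + b ∈ Φ` one has `a + b ∈ N`. -/
def NormalIn (Φ S N : Set V) : Prop :=
  ∀ a ∈ S, ∀ b ∈ N, a + b ∈ Φ → a + b ∈ N

/-- `rz(N) = {β ∈ Φ⁺ ∖ N : ∀ γ ∈ Φ⁺, β + γ ∉ Φ⁺ or β + γ ∈ N}`. -/
def rzSet (Φ N : Set V) : Set V :=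
  {b | b ∈ Φ \ N ∧ ∀ c ∈ Φ, b + c ∉ Φ ∨ b + c ∈ N}

/-- `a ≺ b` iff `b - a` is a sum of one or more elements of `Φ`. -/
def prec (Φ : Set V) (a b : V) : Prop :=
  ∃ m : Multiset V, m ≠ 0 ∧ (∀ v ∈ m, v ∈ Φ) ∧ b = a + m.sum

/-- `a ≼ b` iff `a ≺ b` or `a = b`. -/
def preceq (Φ : Set V) (a b : V) : Prop := prec Φ a b ∨ a = b

/-- The hook `h(a) = {γ ∈ Φ⁺ : a - γ ∈ Φ⁺ ∪ {0}}`. -/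
def hook (Φ : Set V) (a : V) : Set V :=
  {c | c ∈ Φ ∧ (a - c ∈ Φ ∨ a - c = 0)}

/-- `n₀(a) = {a}` and `n_{i+1}(a) = {b + c : b ∈ n_i(a), c ∈ Φ⁺} ∩ Φ⁺`. -/
def nIter (Φ : Set V) (a : V) : ℕ → Set V
  | 0 => {a}
  | i + 1 => {x | x ∈ Φ ∧ ∃ b ∈ nIter Φ a i, ∃ c ∈ Φ, x = b + c}

/-- `n(a) = ⋃_{i ≥ 1} n_i(a)`. -/
def nSet (Φ : Set V) (a : V) : Set V := ⋃ i : ℕ, nIter Φ a (i + 1)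

/-- `k₀(a) = n(a)` and `k_{i+1}(a) = (rz(k_i(a)) ∖ {a}) ∪ k_i(a)`. -/
def kIter (Φ : Set V) (a : V) : ℕ → Set V
  | 0 => nSet Φ a
  | i + 1 => (rzSet Φ (kIter Φ a i) \ {a}) ∪ kIter Φ a i

/-- `k(a) = ⋃_{i ≥ 0} k_i(a)`. -/
def kSet (Φ : Set V) (a : V) : Set V := ⋃ i : ℕ, kIter Φ a i

/-- `w₀(a) = {a}` and `w_{i+1}(a) = ⋃_{b ∈ w_i(a)} h(b)`. -/
def wIter (Φ : Set V) (a : V) : ℕ → Set V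
  | 0 => {a}
  | i + 1 => ⋃ b ∈ wIter Φ a i, hook Φ b

/-- `w(a) = ⋃_{i ≥ 0} w_i(a)`. -/
def wSet (Φ : Set V) (a : V) : Set V := ⋃ i : ℕ, wIter Φ a i

/-- The closed pattern generated by `M`: the intersection of all closed
patterns containing `M`. -/
def genPattern (Φ M : Set V) : Set V :=
  ⋂₀ {S : Set V | M ⊆ S ∧ S ⊆ Φ ∧ ClosedIn Φ S}

/-- The normal closure of `M` in a closed pattern `S`: the intersection of all
closed patterns `N` with `M ⊆ N ⊆ S` and `N ⊴ S`. -/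
def normalClosure (Φ S M : Set V) : Set V :=
  ⋂₀ {N : Set V | M ⊆ N ∧ N ⊆ S ∧ ClosedIn Φ N ∧ NormalIn Φ S N}

end RSP

open scoped RealInnerProductSpace

/-- A finite reduced irreducible crystallographic root system `roots` in a real
inner product space, together with a base `base` (so that every root is a
nonnegative or nonpositive integral combination of the base). -/
structure RSB (V : Type*) [NormedAddCommGroup V] [InnerProductSpace ℝ V] where
  roots : Set V
  base : Set V
  finite : roots.Finite
  zero_not_mem : (0 : V) ∉ roots
  span_top : Submodule.span ℝ roots = ⊤
  reduced : ∀ a ∈ roots, ∀ t : ℝ, t • a ∈ roots → t = 1 ∨ t = -1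
  reflection_mem : ∀ a ∈ roots, ∀ b ∈ roots,
      b - (2 * ⟪b, a⟫ / ⟪a, a⟫) • a ∈ roots
  crystallographic : ∀ a ∈ roots, ∀ b ∈ roots,
      ∃ z : ℤ, 2 * ⟪b, a⟫ / ⟪a, a⟫ = (z : ℝ)
  irreducible : ∀ A B : Set V, A ∪ B = roots → A.Nonempty → B.Nonempty →
      ∃ a ∈ A, ∃ b ∈ B, ⟪a, b⟫ ≠ 0
  base_subset : base ⊆ roots
  base_indep : LinearIndependent ℝ (fun x : ↥base => (x : V))
  base_decomp : ∀ a ∈ roots,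
      (∃ c : V →₀ ℕ, ↑c.support ⊆ base ∧ a = c.sum fun v k => k • v) ∨
      (∃ c : V →₀ ℕ, ↑c.support ⊆ base ∧ a = -(c.sum fun v k => k • v))

/-- The set `Φ⁺` of positive roots (w.r.t. the base) of a root system. -/
def RSB.pos {V : Type*} [NormedAddCommGroup V] [InnerProductSpace ℝ V]
    (R : RSB V) : Set V :=
  {a | a ∈ R.roots ∧ ∃ c : V →₀ ℕ, ↑c.support ⊆ R.base ∧ a = c.sum fun v k => k • v}

open RSP

namespace RSP

section Reach

variable {V : Type*} [AddCommGroup V] {Φ : Set V} {a b x : V}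

/-- `Reach Φ b x`: there is a chain `b = b₀, b₁, …, bₙ = x`, `n ≥ 0`, in which each `bᵢ₊₁` lies
in `Φ` and is `bᵢ` plus an element of `Φ`. The start `b` itself is not required to be in `Φ`. -/
def Reach (Φ : Set V) : V → V → Prop :=
  Relation.ReflTransGen fun x y => y ∈ Φ ∧ ∃ c ∈ Φ, y = x + c

/-- The elements of `Φ` from which `a` is not reachable. -/
def nonReach (Φ : Set V) (a : V) : Set V := {b | b ∈ Φ ∧ ¬ Reach Φ b a}

lemma Reach.eq_or_step (h : Reach Φ b a) : b = a ∨ ∃ c ∈ Φ, b + c ∈ Φ ∧ Reach Φ (b + c) a := by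
  rcases Relation.ReflTransGen.cases_head h with h | ⟨y, ⟨hy, c, hc, rfl⟩, h⟩
  · exact Or.inl h
  · exact Or.inr ⟨c, hc, hy, h⟩

lemma Reach.head {c : V} (hc : c ∈ Φ) (hbc : b + c ∈ Φ) (h : Reach Φ (b + c) a) : Reach Φ b a :=
  Relation.ReflTransGen.head ⟨hbc, c, hc, rfl⟩ h

lemma Reach.mem_of_normal {M : Set V} (hM : NormalPattern Φ M) (h : Reach Φ b x) (hb : b ∈ M) :
    x ∈ M := by
  induction h with
  | refl => exact hb
  | tail _ hs ih =>
    obtain ⟨hy, c, hc, rfl⟩ := hs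
    rw [add_comm] at hy ⊢
    exact hM.2 c hc _ ih hy

lemma Reach.height_le {f : V →+ ℝ} (hf : ∀ v ∈ Φ, 0 < f v) (h : Reach Φ b x) : f b ≤ f x := by
  induction h with
  | refl => exact le_rfl
  | tail _ hs ih =>
    obtain ⟨-, c, hc, rfl⟩ := hs
    have := hf c hc
    rw [map_add]
    linarith

lemma not_reach_of_height_lt {f : V →+ ℝ} (hf : ∀ v ∈ Φ, 0 < f v) (h : f a < f b) :
    ¬ Reach Φ b a := fun hr => (hr.height_le hf).not_gt h

lemma nonReach_normal : NormalPattern Φ (nonReach Φ a) := by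
  refine ⟨fun b hb => hb.1, fun c hc b hb hcb => ⟨hcb, fun h => hb.2 ?_⟩⟩
  rw [add_comm] at hcb h
  exact h.head hc hcb

lemma notMem_nonReach : a ∉ nonReach Φ a := fun h => h.2 Relation.ReflTransGen.refl

lemma subset_nonReach {M : Set V} (hM : NormalPattern Φ M) (ha : a ∉ M) : M ⊆ nonReach Φ a :=
  fun _ hb => ⟨hM.1 hb, fun h => ha (h.mem_of_normal hM hb)⟩

lemma rzSet_nonReach {f : V →+ ℝ} (hf : ∀ v ∈ Φ, 0 < f v) (ha : a ∈ Φ) :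
    rzSet Φ (nonReach Φ a) = {a} := by
  ext b
  constructor
  · rintro ⟨⟨hb, hbK⟩, hrz⟩
    have hr : Reach Φ b a := by
      by_contra h
      exact hbK ⟨hb, h⟩
    rcases hr.eq_or_step with h | ⟨c, hc, hbc, h⟩
    · exact h
    · rcases hrz c hc with h' | h'
      exacts [absurd hbc h', absurd h h'.2]
  · rintro rfl
    refine ⟨⟨ha, notMem_nonReach⟩, fun c hc => or_iff_not_imp_left.2 fun hbc => ?_⟩
    refine ⟨not_not.1 hbc, not_reach_of_height_lt hf ?_⟩
    rw [map_add]
    linarith [hf c hc]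

lemma height_le_of_mem_nIter {f : V →+ ℝ} (hf : ∀ v ∈ Φ, 0 < f v) :
    ∀ (i : ℕ) (x : V), x ∈ nIter Φ a i → f a ≤ f x
  | 0, x, hx => by rw [show x = a from hx]
  | i + 1, x, ⟨_, b, hb, c, hc, h⟩ => by
    have := height_le_of_mem_nIter hf i b hb
    have := hf c hc
    rw [h, map_add]
    linarith

lemma nSet_subset_nonReach {f : V →+ ℝ} (hf : ∀ v ∈ Φ, 0 < f v) : nSet Φ a ⊆ nonReach Φ a := by
  intro x hx
  obtain ⟨i, hxΦ, b, hb, c, hc, rfl⟩ := Set.mem_iUnion.1 hx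
  refine ⟨hxΦ, not_reach_of_height_lt hf ?_⟩
  have := height_le_of_mem_nIter hf i b hb
  have := hf c hc
  rw [map_add]
  linarith

lemma kIter_subset_nonReach {f : V →+ ℝ} (hf : ∀ v ∈ Φ, 0 < f v) :
    ∀ i : ℕ, kIter Φ a i ⊆ nonReach Φ a
  | 0 => nSet_subset_nonReach hf
  | i + 1 => by
    rintro b (⟨⟨⟨hb, -⟩, hrz⟩, hba⟩ | hb)
    · refine ⟨hb, fun hr => ?_⟩
      rcases hr.eq_or_step with h | ⟨c, hc, hbc, h⟩
      · exact hba h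
      · rcases hrz c hc with h' | h'
        exacts [h' hbc, (kIter_subset_nonReach hf i h').2 h]
    · exact kIter_subset_nonReach hf i hb

lemma kIter_mono : Monotone (kIter Φ a) :=
  monotone_nat_of_le_succ fun _ => Set.subset_union_right

/-- As the increasing chain `k_i(a)` has finite union, it reaches that union. -/
lemma exists_kIter_eq_kSet (hfin : (kSet Φ a).Finite) : ∃ i, kIter Φ a i = kSet Φ a := by
  have hmem : ∀ x : kSet Φ a, ∃ i, (x : V) ∈ kIter Φ a i := fun x => Set.mem_iUnion.1 x.2
  choose g hg using hmem
  have := hfin.to_subtype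
  obtain ⟨i, hi⟩ := (Set.finite_range g).bddAbove
  exact ⟨i, (Set.subset_iUnion (kIter Φ a) i).antisymm fun x hx =>
    kIter_mono (hi (Set.mem_range_self ⟨x, hx⟩)) (hg ⟨x, hx⟩)⟩

/-- `k(a)` consists of the elements of `Φ` from which `a` is not reachable. -/
lemma kSet_eq_nonReach (hfin : Φ.Finite) {f : V →+ ℝ} (hf : ∀ v ∈ Φ, 0 < f v) :
    kSet Φ a = nonReach Φ a := by
  have hsub : kSet Φ a ⊆ nonReach Φ a := Set.iUnion_subset (kIter_subset_nonReach hf)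
  refine hsub.antisymm fun b hb => ?_
  obtain ⟨i, hi⟩ := exists_kIter_eq_kSet (hfin.subset (hsub.trans nonReach_normal.1))
  -- On the finite set `Φ`, induction along decreasing height is well-founded.
  have : IsStrictOrder V fun x y => f y < f x :=
    { irrefl := fun _ => lt_irrefl _
      trans := fun _ _ _ h₁ h₂ => h₂.trans h₁ }
  have hwf : Φ.WellFoundedOn fun x y => f y < f x := hfin.wellFoundedOn
  refine hwf.induction (P := fun b => b ∈ nonReach Φ a → b ∈ kSet Φ a) hb.1 ?_ hb
  intro b hbΦ ih hb
  by_contra hbk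
  refine hbk (Set.mem_iUnion.2 ⟨i + 1, Or.inl ⟨⟨⟨hbΦ, hi ▸ hbk⟩, fun c hc => ?_⟩, ?_⟩⟩)
  · refine or_iff_not_imp_left.2 fun hbc => ?_
    rw [not_not] at hbc
    rw [hi]
    refine ih _ hbc ?_ ⟨hbc, fun h => hb.2 (h.head hc hbc)⟩
    rw [map_add]
    linarith [hf c hc]
  · rintro rfl
    exact notMem_nonReach hb

end Reach

end RSP

/-- The height, i.e. the linear functional equal to `1` on each simple root, is positive on the
positive roots. -/
lemma RSB.exists_height {V : Type*} [NormedAddCommGroup V] [InnerProductSpace ℝ V] (R : RSB V) :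
    ∃ f : V →+ ℝ, ∀ v ∈ R.pos, 0 < f v := by
  have hli : LinearIndepOn ℝ id R.base := R.base_indep
  let B := Module.Basis.extend hli
  let f : V →ₗ[ℝ] ℝ := B.constr ℝ fun _ => (1 : ℝ)
  have hf : ∀ v ∈ R.base, f v = 1 := by
    intro v hv
    have h := B.constr_basis ℝ (fun _ => (1 : ℝ)) ⟨v, hli.subset_extend _ hv⟩
    rwa [Module.Basis.extend_apply_self] at h
  refine ⟨f.toAddMonoidHom, ?_⟩
  rintro v ⟨hv, c, hc, rfl⟩
  have hc0 : c.support.Nonempty := by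
    rw [Finsupp.support_nonempty_iff]
    rintro rfl
    exact R.zero_not_mem (by simpa using hv)
  change 0 < f _
  rw [Finsupp.sum, map_sum]
  refine Finset.sum_pos (fun v hv => ?_) hc0
  rw [map_nsmul, hf v (hc hv), nsmul_one]
  exact_mod_cast Nat.pos_of_ne_zero (Finsupp.mem_support_iff.1 hv)

/-- For every positive root `α`: `k(α)` is a normal pattern
not containing `α`, `rz(k(α)) = {α}`, and `k(α)` is the largest normal pattern
not containing `α`. -/
theorem kSet_normal_rz_and_largest
    (V : Type*) [NormedAddCommGroup V] [InnerProductSpace ℝ V]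
    [FiniteDimensional ℝ V]
    (R : RSB V) (a : V) (ha : a ∈ R.pos) :
    NormalPattern R.pos (kSet R.pos a) ∧
    a ∉ kSet R.pos a ∧
    rzSet R.pos (kSet R.pos a) = {a} ∧
    ∀ M : Set V, NormalPattern R.pos M → a ∉ M → M ⊆ kSet R.pos a := by
  obtain ⟨f, hf⟩ := R.exists_height
  have hfin : R.pos.Finite := R.finite.subset fun _ h => h.1
  rw [kSet_eq_nonReach hfin hf]
  exact ⟨nonReach_normal, notMem_nonReach, rzSet_nonReach hf ha, fun _ => subset_nonReach⟩
end

section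
/- For a subset Σ ⊆ Φ⁺ the following are equivalent: (i) there exists a normal pattern N ⊆ Φ⁺ with Σ = rz(N); (ii) there exists a unique normal pattern N ⊆ Φ⁺ with Σ = rz(N); (iii) Σ is an antichain of the poset (Φ⁺, ≼), i.e., distinct elements of Σ are incomparable with respect to ≼. -/
open scoped RealInnerProductSpace

open RSP

/-- One step upwards in the root poset: `y ∈ Φ` and `y = x + c` for some `c ∈ Φ`. -/
def RSP.Step {V : Type*} [AddCommGroup V] (Φ : Set V) (x y : V) : Prop :=
  y ∈ Φ ∧ ∃ c ∈ Φ, y = x + c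

namespace RSB

/-! ### Root system lemmas -/

section Roots

variable {V : Type*} [NormedAddCommGroup V] [InnerProductSpace ℝ V] (R : RSB V)

lemma neg_mem {a : V} (ha : a ∈ R.roots) : -a ∈ R.roots := by
  have h := R.reflection_mem a ha a ha
  have h0 : a ≠ 0 := fun h => R.zero_not_mem (h ▸ ha)
  have h1 : ⟪a, a⟫ ≠ 0 := inner_self_ne_zero.mpr h0
  rw [mul_div_assoc, div_self h1, mul_one, two_smul] at h
  convert h using 1
  abel

/-- If both Cartan integers were at least `2`, then `‖a - b‖² ≤ 0`; so one of them is `1`, and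
the corresponding reflection yields `±(a - b)`. -/
lemma sub_mem {a b : V} (ha : a ∈ R.roots) (hb : b ∈ R.roots) (hab : a ≠ b)
    (h : 0 < ⟪a, b⟫) : a - b ∈ R.roots := by
  have key : ∀ x ∈ R.roots, ∀ y ∈ R.roots, 0 < ⟪x, y⟫ → x - y ∈ R.roots ∨ ⟪y, y⟫ ≤ ⟪x, y⟫ := by
    intro x hx y hy hxy
    have hy0 : y ≠ 0 := fun h => R.zero_not_mem (h ▸ hy)
    have hyy : 0 < ⟪y, y⟫ := real_inner_self_pos.mpr hy0
    obtain ⟨z, hz⟩ := R.crystallographic y hy x hx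
    have hr := R.reflection_mem y hy x hx
    have hzpos : 0 < z := by
      have : (0 : ℝ) < z := by rw [← hz]; positivity
      exact_mod_cast this
    rcases (show z = 1 ∨ 2 ≤ z by omega) with h1 | h2
    · left
      rw [hz, h1] at hr
      simpa using hr
    · right
      have h2' : (2 : ℝ) ≤ z := by exact_mod_cast h2
      rw [← hz, le_div_iff₀ hyy] at h2'
      linarith
  rcases key a ha b hb h with h1 | h1
  · exact h1
  have hba : ⟪b, a⟫ = ⟪a, b⟫ := real_inner_comm _ _
  rcases key b hb a ha (hba ▸ h) with h2 | h2
  · simpa using R.neg_mem h2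
  · exfalso
    have h3 : ⟪a - b, a - b⟫ ≤ 0 := by
      rw [real_inner_sub_sub_self]
      linarith
    have h4 : 0 < ⟪a - b, a - b⟫ := real_inner_self_pos.mpr (sub_ne_zero.mpr hab)
    linarith

lemma add_mem {a b : V} (ha : a ∈ R.roots) (hb : b ∈ R.roots) (hab : a ≠ -b)
    (h : ⟪a, b⟫ < 0) : a + b ∈ R.roots := by
  have := R.sub_mem ha (R.neg_mem hb) hab (by rw [inner_neg_right]; linarith)
  simpa using this

/-- A height functional: linear, taking the value `1` on the base. -/
lemma exists_height_s11 : ∃ f : V →ₗ[ℝ] ℝ, ∀ v ∈ R.pos, 0 < f v := by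
  have hli : LinearIndepOn ℝ id R.base := R.base_indep
  let B := Module.Basis.extend hli
  let f : V →ₗ[ℝ] ℝ := B.constr ℝ (fun _ => (1 : ℝ))
  have hf : ∀ v ∈ R.base, f v = 1 := by
    intro v hv
    have h1 : B ⟨v, hli.subset_extend _ hv⟩ = v := Module.Basis.extend_apply_self hli _
    have h2 := B.constr_basis ℝ (fun _ => (1 : ℝ)) ⟨v, hli.subset_extend _ hv⟩
    rwa [h1] at h2
  refine ⟨f, ?_⟩
  rintro v ⟨hv, c, hc, rfl⟩
  have hc0 : c ≠ 0 := by
    rintro rfl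
    exact R.zero_not_mem (by simpa using hv)
  rw [Finsupp.sum, map_sum]
  refine Finset.sum_pos (fun w hw => ?_) (Finsupp.support_nonempty_iff.mpr hc0)
  rw [map_nsmul, hf w (hc hw), nsmul_eq_mul, mul_one]
  exact_mod_cast Nat.pos_of_ne_zero (Finsupp.mem_support_iff.mp hw)

/-- Nonnegative integral combinations of the base. -/
def cone : AddSubmonoid V where
  carrier := {a | ∃ c : V →₀ ℕ, ↑c.support ⊆ R.base ∧ a = c.sum fun v k => k • v}
  zero_mem' := ⟨0, by simp, by simp⟩
  add_mem' := by
    classical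
    rintro _ _ ⟨c, hc, rfl⟩ ⟨d, hd, rfl⟩
    refine ⟨c + d, fun x hx => ?_, ?_⟩
    · rcases Finset.mem_union.mp (Finsupp.support_add hx) with h | h
      · exact hc h
      · exact hd h
    · rw [Finsupp.sum_add_index'] <;> simp [add_smul]

lemma mem_pos_iff {a : V} : a ∈ R.pos ↔ a ∈ R.roots ∧ a ∈ R.cone := Iff.rfl

/-! ### The order relation and its generating steps -/

lemma transGen_of_prec_aux (n : ℕ) : ∀ (m : Multiset V) (a b : V), m.card = n → m ≠ 0 →
    (∀ v ∈ m, v ∈ R.pos) → a ∈ R.pos → b ∈ R.pos → b = a + m.sum →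
    Relation.TransGen (Step R.pos) a b := by
  classical
  obtain ⟨f, hf⟩ := R.exists_height_s11
  have hfs : ∀ m : Multiset V, (∀ v ∈ m, v ∈ R.pos) → 0 ≤ f m.sum := by
    intro m hm
    rw [map_multiset_sum]
    refine Multiset.sum_nonneg fun x hx => ?_
    obtain ⟨v, hv, rfl⟩ := Multiset.mem_map.mp hx
    exact (hf v (hm v hv)).le
  induction n with
  | zero =>
    intro m a b hm hm0
    exact absurd (Multiset.card_eq_zero.mp hm) hm0
  | succ n ih =>
    intro m a b hcard hm0 hm ha hb hab
    obtain ⟨v, hv, hvpos⟩ : ∃ v ∈ m, 0 < ⟪b - a, v⟫ := by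
      by_contra! hcon
      obtain ⟨w, hw⟩ := Multiset.exists_mem_of_ne_zero hm0
      have hsum : b - a = m.sum := by rw [hab]; abel
      have hne : b - a ≠ 0 := by
        intro h0
        have h1 := hf w (hm w hw)
        have h2 := hfs (m.erase w) fun x hx => hm x (Multiset.mem_of_mem_erase hx)
        have h3 : w + (m.erase w).sum = 0 := by
          rw [Multiset.sum_erase hw, ← hsum, h0]
        have h4 := congrArg f h3
        rw [map_add, map_zero] at h4
        linarith
      have h1 : 0 < ⟪b - a, b - a⟫ := real_inner_self_pos.mpr hne
      have h2 : ⟪b - a, m.sum⟫ ≤ 0 := by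
        have h3 : ⟪b - a, m.sum⟫ = (m.map fun x => ⟪b - a, x⟫).sum :=
          map_multiset_sum (innerₗ V (b - a)) m
        rw [h3]
        have h4 := Multiset.sum_nonneg (s := m.map fun x => -⟪b - a, x⟫) (by
          intro x hx
          obtain ⟨y, hy, rfl⟩ := Multiset.mem_map.mp hx
          linarith [hcon y hy])
        rw [Multiset.sum_map_neg] at h4
        linarith
      rw [← hsum] at h2
      linarith
    have hvP := hm v hv
    have hrest : ∀ x ∈ m.erase v, x ∈ R.pos := fun x hx => hm x (Multiset.mem_of_mem_erase hx)
    have hsum : v + (m.erase v).sum = m.sum := Multiset.sum_erase hv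
    have hcard' : (m.erase v).card = n := by rw [Multiset.card_erase_of_mem hv, hcard]; rfl
    have hcone : (m.erase v).sum ∈ R.cone :=
      AddSubmonoid.multiset_sum_mem _ _ fun x hx => (hrest x hx).2
    rw [inner_sub_left] at hvpos
    by_cases hav : ⟪a, v⟫ < 0
    · have hne : a ≠ -v := by
        intro h
        have h1 := hf a ha
        have h2 := hf v hvP
        rw [h, map_neg] at h1
        linarith
      have hmem : a + v ∈ R.pos :=
        ⟨R.add_mem ha.1 hvP.1 hne hav, R.cone.add_mem ha.2 hvP.2⟩
      have hstep : Step R.pos a (a + v) := ⟨hmem, v, hvP, rfl⟩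
      by_cases h0 : m.erase v = 0
      · have : b = a + v := by rw [hab, ← hsum, h0]; simp
        rw [this]
        exact .single hstep
      · exact .head hstep (ih _ _ _ hcard' h0 hrest hmem hb (by rw [hab, ← hsum, add_assoc]))
    · have hbv : 0 < ⟪b, v⟫ := by linarith
      have hbeq : b - v = a + (m.erase v).sum := by rw [hab, ← hsum]; abel
      have hne : b ≠ v := by
        intro h
        have h1 := hf a ha
        have h2 := hfs _ hrest
        have h3 := congrArg f hbeq
        rw [h, sub_self, map_zero, map_add] at h3
        linarith
      have hmem : b - v ∈ R.pos :=
        ⟨R.sub_mem hb.1 hvP.1 hne hbv, hbeq ▸ R.cone.add_mem ha.2 hcone⟩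
      have hstep : Step R.pos (b - v) b := ⟨hb, v, hvP, by abel⟩
      by_cases h0 : m.erase v = 0
      · have : b - v = a := by rw [hbeq, h0]; simp
        exact .single (this ▸ hstep)
      · exact .tail (ih _ _ _ hcard' h0 hrest ha hmem hbeq) hstep

/-- Between positive roots, `≺` is generated by adding single positive roots without leaving
`Φ⁺`. -/
lemma transGen_of_prec {a b : V} (ha : a ∈ R.pos) (hb : b ∈ R.pos) (h : prec R.pos a b) :
    Relation.TransGen (Step R.pos) a b := by
  obtain ⟨m, hm0, hm, hab⟩ := h
  exact R.transGen_of_prec_aux _ m a b rfl hm0 hm ha hb hab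

end Roots

end RSB

namespace RSP

section Order

variable {V : Type*} [AddCommGroup V] {Φ : Set V}

lemma prec_add {a c : V} (hc : c ∈ Φ) : prec Φ a (a + c) :=
  ⟨{c}, by simp, by simpa using hc, by simp⟩

lemma prec_trans {a b c : V} (h : prec Φ a b) (h' : prec Φ b c) : prec Φ a c := by
  obtain ⟨m, hm0, hm, rfl⟩ := h
  obtain ⟨m', -, hm', rfl⟩ := h'
  refine ⟨m + m', by simp [hm0], fun v hv => ?_, by rw [Multiset.sum_add, add_assoc]⟩
  rcases Multiset.mem_add.mp hv with h | h
  · exact hm v h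
  · exact hm' v h

lemma prec_of_prec_of_preceq {a b c : V} (h : prec Φ a b) (h' : preceq Φ b c) : prec Φ a c := by
  rcases h' with h' | rfl
  · exact prec_trans h h'
  · exact h

lemma preceq_trans {a b c : V} (h : preceq Φ a b) (h' : preceq Φ b c) : preceq Φ a c := by
  rcases h with h | rfl
  · exact .inl (prec_of_prec_of_preceq h h')
  · exact h'

lemma preceq_of_reflTransGen {a b : V} (h : Relation.ReflTransGen (Step Φ) a b) :
    preceq Φ a b := by
  induction h with
  | refl => exact .inr rfl
  | tail _ h ih =>
    obtain ⟨-, c, hc, rfl⟩ := h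
    exact preceq_trans ih (.inl (prec_add hc))

end Order

end RSP

/-! ### Normal patterns as upper sets -/

namespace RSB

variable {V : Type*} [NormedAddCommGroup V] [InnerProductSpace ℝ V] (R : RSB V)

lemma prec_lt {f : V →ₗ[ℝ] ℝ} (hf : ∀ v ∈ R.pos, 0 < f v) {a b : V} (ha : a ∈ R.pos)
    (hb : b ∈ R.pos) (h : prec R.pos a b) : f a < f b := by
  replace h := R.transGen_of_prec ha hb h
  clear hb
  induction h with
  | single h =>
    obtain ⟨-, c, hc, rfl⟩ := h
    rw [map_add]
    linarith [hf c hc]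
  | tail _ h ih =>
    obtain ⟨-, c, hc, rfl⟩ := h
    rw [map_add]
    linarith [hf c hc]

lemma mem_of_prec {N : Set V} (hN : NormalPattern R.pos N) {a b : V} (ha : a ∈ N)
    (hb : b ∈ R.pos) (h : prec R.pos a b) : b ∈ N := by
  replace h := R.transGen_of_prec (hN.1 ha) hb h
  clear hb
  have step : ∀ x y, x ∈ N → Step R.pos x y → y ∈ N := by
    rintro x y hx ⟨hy, c, hc, rfl⟩
    rw [add_comm] at hy ⊢
    exact hN.2 c hc x hx hy
  induction h with
  | single h => exact step _ _ ha h
  | tail _ h ih => exact step _ _ ih h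

/-- The elements of `rz(N)` are maximal in the complement of `N`. -/
lemma mem_of_rzSet_prec {N : Set V} (hN : NormalPattern R.pos N) {a b : V}
    (ha : a ∈ rzSet R.pos N) (hb : b ∈ R.pos) (h : prec R.pos a b) : b ∈ N := by
  obtain ⟨x, ⟨hx, c, hc, rfl⟩, hxb⟩ :=
    Relation.TransGen.head'_iff.mp (R.transGen_of_prec ha.1.1 hb h)
  have hxN := (ha.2 c hc).resolve_left (not_not.mpr hx)
  rcases preceq_of_reflTransGen hxb with h | rfl
  · exact R.mem_of_prec hN hxN hb h
  · exact hxN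

/-- By finiteness, every element of the complement of `N` lies below a maximal one. -/
lemma exists_rzSet_preceq {N : Set V} {x : V} (hx : x ∈ R.pos) (hxN : x ∉ N) :
    ∃ s ∈ rzSet R.pos N, preceq R.pos x s := by
  obtain ⟨f, hf⟩ := R.exists_height_s11
  have hfin : {y | y ∈ R.pos ∧ y ∉ N ∧ preceq R.pos x y}.Finite :=
    R.finite.subset fun y hy => hy.1.1
  obtain ⟨s, ⟨hs, hsN, hxs⟩, hmax⟩ := Set.exists_max_image _ f hfin ⟨x, hx, hxN, .inr rfl⟩
  refine ⟨s, ⟨⟨hs, hsN⟩, fun c hc => ?_⟩, hxs⟩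
  by_contra! hcon
  have h1 := hmax (s + c) ⟨hcon.1, hcon.2, preceq_trans hxs (.inl (prec_add hc))⟩
  rw [map_add] at h1
  linarith [hf c hc]

/-- A normal pattern is recovered from the set `rz(N)`. -/
lemma eq_of_rzSet {N : Set V} (hN : NormalPattern R.pos N) :
    N = {x | x ∈ R.pos ∧ ∀ s ∈ rzSet R.pos N, ¬ preceq R.pos x s} := by
  ext x
  constructor
  · refine fun hx => ⟨hN.1 hx, fun s hs hxs => hs.1.2 ?_⟩
    rcases hxs with h | rfl
    · exact R.mem_of_prec hN hx hs.1.1 h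
    · exact hx
  · rintro ⟨hx, h⟩
    by_contra hxN
    obtain ⟨s, hs, hxs⟩ := R.exists_rzSet_preceq hx hxN
    exact h s hs hxs

lemma exists_of_antichain {S : Set V} (hS : S ⊆ R.pos)
    (h : ∀ a ∈ S, ∀ b ∈ S, a ≠ b → ¬ preceq R.pos a b) :
    ∃ N : Set V, NormalPattern R.pos N ∧ rzSet R.pos N = S := by
  obtain ⟨f, hf⟩ := R.exists_height_s11
  refine ⟨{x | x ∈ R.pos ∧ ∀ s ∈ S, ¬ preceq R.pos x s}, ⟨fun x hx => hx.1, ?_⟩, ?_⟩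
  · rintro a ha b ⟨hb, hbS⟩ hab
    refine ⟨hab, fun s hs hle => hbS s hs (preceq_trans (.inl ?_) hle)⟩
    rw [add_comm]
    exact prec_add ha
  · ext b
    constructor
    · rintro ⟨⟨hb, hbN⟩, hmax⟩
      obtain ⟨s, hs, hbs⟩ : ∃ s ∈ S, preceq R.pos b s := by
        by_contra! hcon
        exact hbN ⟨hb, hcon⟩
      rcases hbs with hbs | rfl
      · obtain ⟨x, ⟨hx, c, hc, rfl⟩, hxs⟩ :=
          Relation.TransGen.head'_iff.mp (R.transGen_of_prec hb (hS hs) hbs)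
        exact absurd (preceq_of_reflTransGen hxs)
          (((hmax c hc).resolve_left (not_not.mpr hx)).2 s hs)
      · exact hs
    · intro hb
      refine ⟨⟨hS hb, fun hN => hN.2 b hb (.inr rfl)⟩, fun c hc => ?_⟩
      by_cases hbc : b + c ∈ R.pos
      · refine .inr ⟨hbc, fun s hs hle => ?_⟩
        have hlt : prec R.pos b s := prec_of_prec_of_preceq (prec_add hc) hle
        refine h b hb s hs ?_ (.inl hlt)
        rintro rfl
        exact lt_irrefl _ (R.prec_lt hf (hS hb) (hS hb) hlt)
      · exact .inl hbc

end RSB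

/-- For `Σ ⊆ Φ⁺` the following are equivalent:
(i) `Σ = rz(N)` for some normal pattern `N`;
(ii) `Σ = rz(N)` for a unique normal pattern `N`;
(iii) `Σ` is an antichain of the root poset `(Φ⁺, ≼)`. -/
theorem representable_tfae
    (V : Type*) [NormedAddCommGroup V] [InnerProductSpace ℝ V]
    [FiniteDimensional ℝ V]
    (R : RSB V) (S : Set V) (hS : S ⊆ R.pos) :
    ((∃ N : Set V, NormalPattern R.pos N ∧ rzSet R.pos N = S) ↔
      (∃! N : Set V, NormalPattern R.pos N ∧ rzSet R.pos N = S)) ∧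
    ((∃ N : Set V, NormalPattern R.pos N ∧ rzSet R.pos N = S) ↔
      (∀ a ∈ S, ∀ b ∈ S, a ≠ b → ¬ preceq R.pos a b)) := by
  refine ⟨⟨?_, ExistsUnique.exists⟩, ?_, R.exists_of_antichain hS⟩
  · rintro ⟨N, hN, hNS⟩
    refine ⟨N, ⟨hN, hNS⟩, ?_⟩
    rintro N' ⟨hN', hNS'⟩
    rw [R.eq_of_rzSet hN, R.eq_of_rzSet hN', hNS, hNS']
  · rintro ⟨N, hN, rfl⟩ a ha b hb hab hle
    exact hb.1.2 (R.mem_of_rzSet_prec hN ha hb.1.1 (hle.resolve_right hab))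
end

section
/- Let α = e_i − e_j with 1 ≤ i < j ≤ n+1. Then: (a) n(α) and k(α) are normal patterns in Φ⁺; (b) n(α) = {e_s − e_t ∈ Φ⁺ : 1 ≤ s ≤ i and j ≤ t ≤ n+1} ∖ {α}; and (c) k(α) = {e_s − e_t ∈ Φ⁺ : s < i or t > j}. -/
open RSP

/-- The standard basis vector `e_i` of `ℝ^{n+1}` (indices `0, …, n`). -/
def eA (n : ℕ) (i : Fin (n + 1)) : Fin (n + 1) → ℝ := Pi.single i 1

/-- The positive roots of type `A_n`: `{e_i - e_j : i < j}`. -/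
def posA (n : ℕ) : Set (Fin (n + 1) → ℝ) :=
  {v | ∃ i j : Fin (n + 1), i < j ∧ v = eA n i - eA n j}

lemma eA_apply (n : ℕ) (i x : Fin (n + 1)) : eA n i x = if x = i then 1 else 0 := by
  simp [eA, Pi.single_apply]

lemma rootA_inj {n : ℕ} {s t a b : Fin (n + 1)} (hst : s < t)
    (h : eA n s - eA n t = eA n a - eA n b) : s = a ∧ t = b := by
  have hs := congrFun h s
  have ht := congrFun h t
  simp only [Pi.sub_apply, eA_apply] at hs ht
  have := hst.ne
  have := hst.ne'
  constructor
  · by_contra hc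
    simp [*] at hs
    split_ifs at hs <;> norm_num at hs
  · by_contra hc
    simp [*] at ht
    split_ifs at ht <;> norm_num at ht

/-- The sum of two positive roots is a root only if the two intervals are adjacent. -/
lemma rootA_add {n : ℕ} {a b c d s t : Fin (n + 1)} (hab : a < b) (hcd : c < d) (hst : s < t)
    (h : eA n a - eA n b + (eA n c - eA n d) = eA n s - eA n t) :
    (b = c ∧ s = a ∧ t = d) ∨ (d = a ∧ s = c ∧ t = b) := by
  by_cases hbc : b = c
  · subst hbc
    have := rootA_inj hst (a := a) (b := d) (by rw [← h]; abel)
    tauto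
  by_cases hda : d = a
  · subst hda
    have := rootA_inj hst (a := c) (b := b) (by rw [← h]; abel)
    tauto
  -- Otherwise the left side has negative coefficients at both `b` and `d`, which forces
  -- `b = t = d`; but then the coefficient there is `-2`.
  exfalso
  have hb := congrFun h b
  have hd := congrFun h d
  have hab' := hab.ne'
  have hcd' := hcd.ne'
  simp only [Pi.sub_apply, Pi.add_apply, eA_apply] at hb hd
  simp only [hbc, hda, hab', hcd', if_true, if_false] at hb hd
  split_ifs at hb hd <;> first | (norm_num at hb; done) | (norm_num at hd; done) | simp_all

lemma mem_posA {n : ℕ} {s t : Fin (n + 1)} (h : s < t) : eA n s - eA n t ∈ posA n :=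
  ⟨s, t, h, rfl⟩

lemma nIter_subset {n : ℕ} {i j : Fin (n + 1)} (hij : i < j) (m : ℕ) :
    ∀ v ∈ nIter (posA n) (eA n i - eA n j) m,
      ∃ s t : Fin (n + 1), s ≤ i ∧ j ≤ t ∧ v = eA n s - eA n t := by
  induction m with
  | zero => rintro v rfl; exact ⟨i, j, le_rfl, le_rfl, rfl⟩
  | succ m ih =>
    rintro v ⟨⟨s, t, hst, rfl⟩, b, hb, c, ⟨c1, c2, hc, rfl⟩, h⟩
    obtain ⟨b1, b2, h1, h2, rfl⟩ := ih b hb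
    refine ⟨s, t, ?_, ?_, rfl⟩ <;>
      rcases rootA_add (by lia) hc hst h.symm with ⟨_, _, _⟩ | ⟨_, _, _⟩ <;> lia

lemma nSet_posA {n : ℕ} {i j : Fin (n + 1)} (hij : i < j) :
    nSet (posA n) (eA n i - eA n j) =
      {v | ∃ s t : Fin (n + 1), s ≤ i ∧ j ≤ t ∧ v = eA n s - eA n t}
        \ {eA n i - eA n j} := by
  ext v
  simp only [nSet, Set.mem_iUnion]
  constructor
  · rintro ⟨m, hm⟩
    refine ⟨nIter_subset hij _ v hm, ?_⟩
    obtain ⟨-, b, hb, c, ⟨c1, c2, hc, rfl⟩, h⟩ := hm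
    obtain ⟨b1, b2, h1, h2, rfl⟩ := nIter_subset hij m b hb
    intro hv
    rw [Set.mem_singleton_iff] at hv
    rcases rootA_add (by lia) hc hij (h.symm.trans hv) with ⟨_, _, _⟩ | ⟨_, _, _⟩ <;> lia
  · rintro ⟨⟨s, t, hs, ht, rfl⟩, hne⟩
    have left : s < i → eA n s - eA n j ∈ nIter (posA n) (eA n i - eA n j) 1 := fun h =>
      ⟨mem_posA (by lia), _, rfl, _, mem_posA h, by abel⟩
    rcases hs.lt_or_eq with hs | rfl
    · rcases ht.lt_or_eq with ht | rfl
      · exact ⟨1, mem_posA (by lia), _, left hs, _, mem_posA ht, by abel⟩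
      · exact ⟨0, left hs⟩
    · rcases ht.lt_or_eq with ht | rfl
      · exact ⟨0, mem_posA (by lia), _, rfl, _, mem_posA ht, by abel⟩
      · exact absurd rfl hne

lemma kIter_subset {n : ℕ} {i j : Fin (n + 1)} (hij : i < j) (m : ℕ) :
    ∀ v ∈ kIter (posA n) (eA n i - eA n j) m,
      ∃ s t : Fin (n + 1), s < t ∧ (s < i ∨ j < t) ∧ v = eA n s - eA n t := by
  induction m with
  | zero =>
    intro v hv
    rw [kIter, nSet_posA hij] at hv
    obtain ⟨⟨s, t, hs, ht, rfl⟩, hne⟩ := hv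
    refine ⟨s, t, by lia, ?_, rfl⟩
    by_contra hc
    obtain rfl : s = i := by lia
    obtain rfl : t = j := by lia
    exact hne rfl
  | succ m ih =>
    rintro v (⟨⟨⟨⟨s, t, hst, rfl⟩, -⟩, hrz⟩, hne⟩ | hv)
    · refine ⟨s, t, hst, ?_, rfl⟩
      by_contra! hc
      -- No interval inside `[i, j]` lies in the previous step, by induction.
      have inner : ∀ a b : Fin (n + 1), a < b → i ≤ a → b ≤ j →
          eA n a - eA n b ∉ kIter (posA n) (eA n i - eA n j) m := by
        intro a b hab ha hb hmem
        obtain ⟨a', b', _, h, e⟩ := ih _ hmem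
        obtain ⟨rfl, rfl⟩ := rootA_inj hab e
        lia
      rcases hc.1.lt_or_eq with hs | rfl
      · have e : eA n s - eA n t + (eA n i - eA n s) = eA n i - eA n t := by abel
        have := hrz _ (mem_posA hs)
        rw [e] at this
        exact this.elim (fun h => h (mem_posA (by lia))) (inner _ _ (by lia) le_rfl hc.2)
      · rcases hc.2.lt_or_eq with ht | rfl
        · have e : eA n i - eA n t + (eA n t - eA n j) = eA n i - eA n j := by abel
          have := hrz _ (mem_posA ht)
          rw [e] at this
          exact this.elim (fun h => h (mem_posA hij)) (inner _ _ hij le_rfl le_rfl)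
        · exact hne rfl
    · exact ih v hv

/-- An interval not contained in `[i, j]` of length at least `n + 1 - m` enters by step `m`:
all its enlargements are longer, so they entered one step earlier. -/
lemma mem_kIter_of_length {n : ℕ} {i j : Fin (n + 1)} (m : ℕ) :
    ∀ s t : Fin (n + 1), s < t → (s < i ∨ j < t) → n + 1 + (s : ℕ) ≤ t + m →
      eA n s - eA n t ∈ kIter (posA n) (eA n i - eA n j) m := by
  induction m with
  | zero => intro s t _ _ h; have := t.isLt; lia
  | succ m ih =>
    intro s t hst h hm
    by_cases hk : eA n s - eA n t ∈ kIter (posA n) (eA n i - eA n j) m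
    · exact Or.inr hk
    refine Or.inl ⟨⟨⟨mem_posA hst, hk⟩, ?_⟩, ?_⟩
    · rintro _ ⟨c1, c2, hc, rfl⟩
      by_cases hp : eA n s - eA n t + (eA n c1 - eA n c2) ∈ posA n
      · obtain ⟨a, b, hab, e⟩ := hp
        right
        rw [e]
        rcases rootA_add hst hc hab e with ⟨rfl, rfl, rfl⟩ | ⟨rfl, rfl, rfl⟩ <;>
          exact ih _ _ hab (by lia) (by lia)
      · exact Or.inl hp
    · intro e
      obtain ⟨rfl, rfl⟩ := rootA_inj hst e
      lia

lemma kSet_posA {n : ℕ} {i j : Fin (n + 1)} (hij : i < j) :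
    kSet (posA n) (eA n i - eA n j) =
      {v | ∃ s t : Fin (n + 1), s < t ∧ (s < i ∨ j < t) ∧ v = eA n s - eA n t} := by
  ext v
  simp only [kSet, Set.mem_iUnion]
  constructor
  · rintro ⟨m, hm⟩
    exact kIter_subset hij m v hm
  · rintro ⟨s, t, hst, h, rfl⟩
    exact ⟨n + 1 + s, mem_kIter_of_length _ s t hst h (by lia)⟩

/-- type `A_n`.  For `α = e_i - e_j`:
(a) `n(α)` and `k(α)` are normal patterns;
(b) `n(α) = {e_s - e_t : s ≤ i, j ≤ t} ∖ {α}`;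
(c) `k(α) = {e_s - e_t : s < t, and s < i or t > j}`. -/
theorem typeA_n_k
    (n : ℕ) (hn : 1 ≤ n) (i j : Fin (n + 1)) (hij : i < j) :
    NormalPattern (posA n) (nSet (posA n) (eA n i - eA n j)) ∧
    NormalPattern (posA n) (kSet (posA n) (eA n i - eA n j)) ∧
    nSet (posA n) (eA n i - eA n j) =
      {v | ∃ s t : Fin (n + 1), s ≤ i ∧ j ≤ t ∧ v = eA n s - eA n t}
        \ {eA n i - eA n j} ∧
    kSet (posA n) (eA n i - eA n j) =
      {v | ∃ s t : Fin (n + 1), s < t ∧ (s < i ∨ j < t) ∧ v = eA n s - eA n t} := by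
  rw [nSet_posA hij, kSet_posA hij]
  refine ⟨⟨?_, ?_⟩, ⟨?_, ?_⟩, rfl, rfl⟩
  · rintro _ ⟨⟨s, t, hs, ht, rfl⟩, -⟩
    exact mem_posA (by lia)
  · rintro _ ⟨a, b, hab, rfl⟩ _ ⟨⟨c, d, hc, hd, rfl⟩, hne⟩ ⟨s, t, hst, e⟩
    rw [e]
    have key := rootA_add hab (by lia) hst e
    refine ⟨⟨s, t, ?_, ?_, rfl⟩, ?_⟩
    · rcases key with ⟨_, _, _⟩ | ⟨_, _, _⟩ <;> lia
    · rcases key with ⟨_, _, _⟩ | ⟨_, _, _⟩ <;> lia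
    · intro h
      obtain ⟨_, _⟩ := rootA_inj hst h
      rcases key with ⟨_, _, _⟩ | ⟨_, _, _⟩ <;> lia
  · rintro _ ⟨s, t, hst, -, rfl⟩
    exact mem_posA hst
  · rintro _ ⟨a, b, hab, rfl⟩ _ ⟨c, d, hcd, h, rfl⟩ ⟨s, t, hst, e⟩
    refine ⟨s, t, hst, ?_, e⟩
    rcases rootA_add hab hcd hst e with ⟨_, _, _⟩ | ⟨_, _, _⟩ <;> lia
end

section
/- Let α = e_i − e_j with 1 ≤ i < j ≤ n+1, and set a(α) := {e_i − e_s : i < s < j}, ℓ(α) := {e_s − e_j : i < s < j}, and s(α) := Φ⁺ ∖ a(α). Then: (a) s(α) is a closed pattern; (b) ℓ(α) ∪ k(α) is normal in s(α); and (c) ℓ(α) ∪ {α} ∪ k(α) is a normal pattern in Φ⁺. -/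
open RSP

/-- The arm `a(α) = {e_i - e_s : i < s < j}` of the hook of `α = e_i - e_j`. -/
def armA (n : ℕ) (i j : Fin (n + 1)) : Set (Fin (n + 1) → ℝ) :=
  {v | ∃ s : Fin (n + 1), i < s ∧ s < j ∧ v = eA n i - eA n s}

/-- The leg `ℓ(α) = {e_s - e_j : i < s < j}` of the hook of `α = e_i - e_j`. -/
def legA (n : ℕ) (i j : Fin (n + 1)) : Set (Fin (n + 1) → ℝ) :=
  {v | ∃ s : Fin (n + 1), i < s ∧ s < j ∧ v = eA n s - eA n j}

/-- The source `s(α) = Φ⁺ ∖ a(α)`. -/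
def srcA (n : ℕ) (i j : Fin (n + 1)) : Set (Fin (n + 1) → ℝ) :=
  posA n \ armA n i j

/-- The order hypothesis only serves to exclude `e_a - e_b = 0`. -/
theorem root_inj {n : ℕ} {a b p q : Fin (n + 1)} (hab : a < b)
    (h : eA n a - eA n b = eA n p - eA n q) : a = p ∧ b = q := by
  have h' : ∀ x, _ := fun x => congrFun h x
  simp only [eA, Pi.sub_apply, Pi.single_apply] at h'
  have h1 := h' a
  have h2 := h' b
  clear h h'
  constructor
  · by_contra hne
    have := hab.ne
    simp only [if_true, if_neg hne, if_neg this] at h1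
    split_ifs at h1 <;> norm_num at h1
  · by_contra hne
    have := hab.ne'
    simp only [if_true, if_neg hne, if_neg this] at h2
    split_ifs at h2 <;> norm_num at h2

/-- Two positive roots sum to a positive root only by concatenating adjacent intervals. -/
theorem root_add {n : ℕ} {a b c d p q : Fin (n + 1)} (hab : a < b) (hcd : c < d) (hpq : p < q)
    (h : (eA n a - eA n b) + (eA n c - eA n d) = eA n p - eA n q) :
    (b = c ∧ p = a ∧ q = d) ∨ (d = a ∧ p = c ∧ q = b) := by
  by_cases hbc : b = c
  · subst hbc
    rw [sub_add_sub_cancel] at h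
    obtain ⟨h1, h2⟩ := root_inj (hab.trans hcd) h
    exact Or.inl ⟨rfl, h1.symm, h2.symm⟩
  by_cases hda : d = a
  · subst hda
    rw [add_comm (eA n d - eA n b), sub_add_sub_cancel] at h
    obtain ⟨h1, h2⟩ := root_inj (hcd.trans hab) h
    exact Or.inr ⟨rfl, h1.symm, h2.symm⟩
  -- Otherwise both `a` and `c` carry positive coefficients on the left, so both equal `p`,
  -- and the coefficient there would be `2`.
  exfalso
  have h' : ∀ x, _ := fun x => congrFun h x
  simp only [eA, Pi.sub_apply, Pi.add_apply, Pi.single_apply] at h'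
  have ha := h' a
  have hc := h' c
  have e1 : a ≠ b := hab.ne
  have e2 : c ≠ d := hcd.ne
  have e3 : a ≠ d := fun e => hda e.symm
  have e4 : c ≠ b := fun e => hbc e.symm
  have hap : a = p := by
    by_contra hne
    simp only [if_true, if_neg hne, if_neg e1, if_neg e3] at ha
    split_ifs at ha <;> norm_num at ha
  have hcp : c = p := by
    by_contra hne
    simp only [if_true, if_neg hne, if_neg e2, if_neg e4] at hc
    split_ifs at hc <;> norm_num at hc
  subst hap
  subst hcp
  simp only [if_true, if_neg e1, if_neg e2, if_neg hpq.ne] at ha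
  norm_num at ha

/-- The positive roots `e_a - e_b` whose interval `[a, b]` is not contained in `[i, j]`. -/
def outside (n : ℕ) (i j : Fin (n + 1)) : Set (Fin (n + 1) → ℝ) :=
  {v | ∃ a b : Fin (n + 1), a < b ∧ (a < i ∨ j < b) ∧ v = eA n a - eA n b}

theorem outside_subset (n : ℕ) (i j : Fin (n + 1)) : outside n i j ⊆ posA n := by
  rintro v ⟨a, b, hab, -, rfl⟩
  exact ⟨a, b, hab, rfl⟩

theorem mem_outside_iff {n : ℕ} {i j a b : Fin (n + 1)} (hab : a < b) :
    eA n a - eA n b ∈ outside n i j ↔ a < i ∨ j < b := by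
  constructor
  · rintro ⟨p, q, hpq, h, e⟩
    obtain ⟨rfl, rfl⟩ := root_inj hab e
    exact h
  · exact fun h => ⟨a, b, hab, h, rfl⟩

theorem outside_normal {n : ℕ} {i j : Fin (n + 1)} {v w : Fin (n + 1) → ℝ}
    (hv : v ∈ posA n) (hw : w ∈ outside n i j) (hvw : v + w ∈ posA n) :
    v + w ∈ outside n i j := by
  obtain ⟨a, b, hab, rfl⟩ := hv
  obtain ⟨c, d, hcd, h, rfl⟩ := hw
  obtain ⟨p, q, hpq, e⟩ := hvw
  rw [e, mem_outside_iff hpq]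
  rcases root_add hab hcd hpq e with ⟨rfl, rfl, rfl⟩ | ⟨rfl, rfl, rfl⟩
  · exact h.imp (hab.trans ·) id
  · exact h.imp id (lt_trans · hab)

theorem nIter_succ_subset {n : ℕ} {i j : Fin (n + 1)} (hij : i < j) (m : ℕ) :
    nIter (posA n) (eA n i - eA n j) (m + 1) ⊆ outside n i j := by
  induction m with
  | zero =>
    rintro x ⟨hx, b, rfl, c, ⟨p, q, hpq, rfl⟩, rfl⟩
    obtain ⟨r, s, hrs, e⟩ := hx
    rw [e, mem_outside_iff hrs]
    rcases root_add hij hpq hrs e with ⟨rfl, rfl, rfl⟩ | ⟨rfl, rfl, rfl⟩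
    · exact Or.inr hpq
    · exact Or.inl hpq
  | succ m ih =>
    rintro x ⟨hx, b, hb, c, hc, rfl⟩
    rw [add_comm b c] at hx ⊢
    exact outside_normal hc (ih hb) hx

theorem kIter_subset_s15 {n : ℕ} {i j : Fin (n + 1)} (hij : i < j) (m : ℕ) :
    kIter (posA n) (eA n i - eA n j) m ⊆ outside n i j := by
  induction m with
  | zero => exact Set.iUnion_subset fun m => nIter_succ_subset hij m
  | succ m ih =>
    refine Set.union_subset ?_ ih
    rintro x ⟨⟨⟨⟨a, b, hab, rfl⟩, -⟩, h⟩, hne⟩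
    rw [mem_outside_iff hab]
    by_contra! hin
    -- A root inside `[i, j]` other than `e_i - e_j` can be extended within `[i, j]`.
    rcases hin.1.lt_or_eq with hia | rfl
    · have e : (eA n a - eA n b) + (eA n i - eA n a) = eA n i - eA n b := by abel
      have hib := hia.trans hab
      rcases h _ ⟨i, a, hia, rfl⟩ with h | h
      · exact h ⟨i, b, hib, e⟩
      · rw [e] at h
        rcases (mem_outside_iff hib).1 (ih h) with h | h
        · exact lt_irrefl _ h
        · exact absurd h (not_lt.2 hin.2)
    · rcases hin.2.lt_or_eq with hbj | rfl
      · have e : (eA n i - eA n b) + (eA n b - eA n j) = eA n i - eA n j := by abel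
        rcases h _ ⟨b, j, hbj, rfl⟩ with h | h
        · exact h ⟨i, j, hij, e⟩
        · rw [e] at h
          rcases (mem_outside_iff hij).1 (ih h) with h | h
          · exact lt_irrefl _ h
          · exact lt_irrefl _ h
      · exact hne rfl

/-- Roots outside `[i, j]` enter the recursion for `k` in order of decreasing height; the bound
`n < (b - a) + m` is vacuous for `m = 0`, so `n(α)` need not be computed. -/
theorem mem_kIter {n : ℕ} {i j : Fin (n + 1)} (hij : i < j) (m : ℕ) :
    ∀ a b : Fin (n + 1), a < b → (a < i ∨ j < b) → n + a < b + m →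
      eA n a - eA n b ∈ kIter (posA n) (eA n i - eA n j) m := by
  induction m with
  | zero => intro a b hab _ h; omega
  | succ m ih =>
    intro a b hab ho h
    by_cases hk : eA n a - eA n b ∈ kIter (posA n) (eA n i - eA n j) m
    · exact Or.inr hk
    refine Or.inl ⟨⟨⟨⟨a, b, hab, rfl⟩, hk⟩, ?_⟩, ?_⟩
    · rintro c ⟨p, q, hpq, rfl⟩
      by_cases hs : (eA n a - eA n b) + (eA n p - eA n q) ∈ posA n
      · right
        obtain ⟨r, s, hrs, e⟩ := hs
        rw [e]
        rcases root_add hab hpq hrs e with ⟨rfl, rfl, rfl⟩ | ⟨rfl, rfl, rfl⟩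
        · exact ih _ _ hrs (by omega) (by omega)
        · exact ih _ _ hrs (by omega) (by omega)
      · exact Or.inl hs
    · intro e
      obtain ⟨rfl, rfl⟩ := root_inj hab e
      exact ho.elim (lt_irrefl _) (lt_irrefl _)

theorem kSet_eq {n : ℕ} {i j : Fin (n + 1)} (hij : i < j) :
    kSet (posA n) (eA n i - eA n j) = outside n i j := by
  refine Set.Subset.antisymm (Set.iUnion_subset fun m => kIter_subset_s15 hij m) ?_
  rintro v ⟨a, b, hab, h, rfl⟩
  exact Set.mem_iUnion.2 ⟨n + 1, mem_kIter hij (n + 1) a b hab h (by omega)⟩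

/-- type `A_n`.  For `α = e_i - e_j`:
(a) the source `s(α)` is a closed pattern;
(b) `ℓ(α) ∪ k(α)` is normal in `s(α)`;
(c) `ℓ(α) ∪ {α} ∪ k(α)` is a normal pattern in `Φ⁺`. -/
theorem typeA_source
    (n : ℕ) (hn : 1 ≤ n) (i j : Fin (n + 1)) (hij : i < j) :
    ClosedIn (posA n) (srcA n i j) ∧
    (legA n i j ∪ kSet (posA n) (eA n i - eA n j) ⊆ srcA n i j ∧
      NormalIn (posA n) (srcA n i j)
        (legA n i j ∪ kSet (posA n) (eA n i - eA n j))) ∧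
    NormalPattern (posA n)
      (legA n i j ∪ {eA n i - eA n j} ∪ kSet (posA n) (eA n i - eA n j)) := by
  rw [kSet_eq hij]
  refine ⟨?_, ⟨?_, ?_⟩, ?_, ?_⟩
  · rintro _ ⟨⟨a, b, hab, rfl⟩, h1⟩ _ ⟨⟨c, d, hcd, rfl⟩, h2⟩ hs
    refine ⟨hs, ?_⟩
    rintro ⟨s, his, hsj, e⟩
    -- If the sum is in the arm, so is the summand that starts at `i`.
    rcases root_add hab hcd his e with ⟨rfl, rfl, rfl⟩ | ⟨rfl, rfl, rfl⟩
    · exact h1 ⟨b, hab, hcd.trans hsj, rfl⟩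
    · exact h2 ⟨d, hcd, hab.trans hsj, rfl⟩
  · rintro v (⟨s, his, hsj, rfl⟩ | ⟨a, b, hab, h, rfl⟩)
    · refine ⟨⟨s, j, hsj, rfl⟩, ?_⟩
      rintro ⟨t, hit, htj, e⟩
      exact his.ne' (root_inj hsj e).1
    · refine ⟨⟨a, b, hab, rfl⟩, ?_⟩
      rintro ⟨t, hit, htj, e⟩
      obtain ⟨rfl, rfl⟩ := root_inj hab e
      exact h.elim (lt_irrefl _) htj.not_gt
  · rintro v ⟨hv, hna⟩ w (⟨s, his, hsj, rfl⟩ | hw) hvw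
    · obtain ⟨a, b, hab, rfl⟩ := hv
      obtain ⟨p, q, hpq, e⟩ := hvw
      rw [e]
      rcases root_add hab hsj hpq e with ⟨rfl, rfl, rfl⟩ | ⟨rfl, rfl, rfl⟩
      · rcases lt_trichotomy i p with h | rfl | h
        · exact Or.inl ⟨p, h, hpq, rfl⟩
        · exact absurd ⟨b, hab, hsj, rfl⟩ hna
        · exact Or.inr ((mem_outside_iff hpq).2 (Or.inl h))
      · exact Or.inr ((mem_outside_iff hpq).2 (Or.inr hab))
    · exact Or.inr (outside_normal hv hw hvw)
  · rintro v ((⟨s, his, hsj, rfl⟩ | rfl) | hv)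
    · exact ⟨s, j, hsj, rfl⟩
    · exact ⟨i, j, hij, rfl⟩
    · exact outside_subset n i j hv
  · intro v hv w hw hvw
    by_cases hwo : w ∈ outside n i j
    · exact Or.inr (outside_normal hv hwo hvw)
    -- The remaining roots are `e_s - e_j` with `i ≤ s < j`.
    obtain ⟨s, his, hsj, rfl⟩ : ∃ s, i ≤ s ∧ s < j ∧ w = eA n s - eA n j := by
      rcases hw with (⟨s, his, hsj, rfl⟩ | rfl) | hw
      · exact ⟨s, his.le, hsj, rfl⟩
      · exact ⟨i, le_rfl, hij, rfl⟩
      · exact absurd hw hwo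
    obtain ⟨a, b, hab, rfl⟩ := hv
    obtain ⟨p, q, hpq, e⟩ := hvw
    rw [e]
    rcases root_add hab hsj hpq e with ⟨rfl, rfl, rfl⟩ | ⟨rfl, rfl, rfl⟩
    · rcases lt_trichotomy i p with h | rfl | h
      · exact Or.inl (Or.inl ⟨p, h, hpq, rfl⟩)
      · exact Or.inl (Or.inr rfl)
      · exact Or.inr ((mem_outside_iff hpq).2 (Or.inl h))
    · exact Or.inr ((mem_outside_iff hpq).2 (Or.inr hab))
end

section
/- Let α = e_1 + e_i with 1 < i ≤ n. Then h(α) = {e_1 + e_i, e_1, e_i} ∪ {e_1 − e_s : 1 < s < i} ∪ {e_s + e_i : 1 < s < i} ∪ {e_1 + e_s : i < s ≤ n} ∪ {e_1 − e_s : i < s ≤ n} ∪ {e_i − e_s : i < s ≤ n} ∪ {e_i + e_s : i < s ≤ n}. -/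
open RSP

/-- The standard basis vector `e_i` of `ℝⁿ`. -/
def eB (n : ℕ) (i : Fin n) : Fin n → ℝ := Pi.single i 1

/-- The positive roots of type `B_n`:
`{e_i - e_j, e_i + e_j : i < j} ∪ {e_i}`. -/
def posB (n : ℕ) : Set (Fin n → ℝ) :=
  {v | ∃ i j : Fin n, i < j ∧ (v = eB n i - eB n j ∨ v = eB n i + eB n j)} ∪
    {v | ∃ i : Fin n, v = eB n i}

theorem eB_apply (n : ℕ) (i j : Fin n) : eB n i j = if j = i then 1 else 0 := by
  simp [eB, Pi.single_apply]

theorem posB_apply_le_one {n : ℕ} {d : Fin n → ℝ} (hd : d ∈ posB n) (a : Fin n) : d a ≤ 1 := by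
  rcases hd with ⟨i, j, hij, rfl | rfl⟩ | ⟨i, rfl⟩ <;>
    simp only [Pi.add_apply, Pi.sub_apply, eB_apply] <;> grind

theorem posB_lt_of_neg_of_pos {n : ℕ} {d : Fin n → ℝ} (hd : d ∈ posB n) {a b : Fin n}
    (ha : d a < 0) (hb : 0 < d b) : b < a := by
  rcases hd with ⟨i, j, hij, rfl | rfl⟩ | ⟨i, rfl⟩ <;>
    simp only [Pi.add_apply, Pi.sub_apply, eB_apply] at ha hb <;> grind

theorem posB_eq_of_neg_of_pos {n : ℕ} {d : Fin n → ℝ} (hd : d ∈ posB n) {a b c : Fin n}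
    (ha : d a < 0) (hb : 0 < d b) (hc : 0 < d c) : b = c := by
  rcases hd with ⟨i, j, hij, rfl | rfl⟩ | ⟨i, rfl⟩ <;>
    simp only [Pi.add_apply, Pi.sub_apply, eB_apply] at ha hb hc <;> grind

theorem add_mem_posB {n : ℕ} {i j : Fin n} (h : i < j) : eB n i + eB n j ∈ posB n :=
  Or.inl ⟨i, j, h, Or.inr rfl⟩

theorem sub_mem_posB {n : ℕ} {i j : Fin n} (h : i < j) : eB n i - eB n j ∈ posB n :=
  Or.inl ⟨i, j, h, Or.inl rfl⟩

theorem eB_mem_posB {n : ℕ} (i : Fin n) : eB n i ∈ posB n := Or.inr ⟨i, rfl⟩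

/-- A decomposition of `a` into two elements of `Φ` puts the first summand in the hook
of `a`. -/
theorem mem_hook_of_add {V : Type*} [AddCommGroup V] {Φ : Set V} {a c d : V}
    (hc : c ∈ Φ) (hd : d ∈ Φ) (h : a = c + d) : c ∈ hook Φ a :=
  ⟨hc, Or.inl (by rwa [h, add_sub_cancel_left])⟩

/-- type `B_n`.  The hook of `α = e_1 + e_i` (with
`e_1 = e i₀` the first coordinate vector and `1 < i`), namely
`h(α) = {e_1+e_i, e_1, e_i} ∪ {e_1-e_s, e_s+e_i : 1 < s < i}
       ∪ {e_1 ± e_s, e_i ∓ e_s : i < s ≤ n}`. -/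
theorem typeB_hook
    (n : ℕ) (hn : 2 ≤ n) (i0 i : Fin n) (h0 : (i0 : ℕ) = 0) (hi : i0 < i) :
    hook (posB n) (eB n i0 + eB n i) =
      ({eB n i0 + eB n i, eB n i0, eB n i} : Set (Fin n → ℝ)) ∪
      {v | ∃ s : Fin n, i0 < s ∧ s < i ∧ v = eB n i0 - eB n s} ∪
      {v | ∃ s : Fin n, i0 < s ∧ s < i ∧ v = eB n s + eB n i} ∪
      {v | ∃ s : Fin n, i < s ∧ v = eB n i0 + eB n s} ∪
      {v | ∃ s : Fin n, i < s ∧ v = eB n i0 - eB n s} ∪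
      {v | ∃ s : Fin n, i < s ∧ v = eB n i - eB n s} ∪
      {v | ∃ s : Fin n, i < s ∧ v = eB n i + eB n s} := by
  have hpos : ∀ j : Fin n, j ≠ i0 → i0 < j := by
    intro j hj
    rw [Fin.lt_def]
    have : (j : ℕ) ≠ i0 := fun h => hj (Fin.ext h)
    omega
  ext v
  simp only [Set.mem_union, Set.mem_insert_iff, Set.mem_singleton_iff, Set.mem_setOf_eq]
  constructor
  · rintro ⟨hv, hd | h0'⟩
    swap
    · rw [sub_eq_zero] at h0'
      simp [← h0']
    have h1 := posB_apply_le_one hd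
    have h2 := fun a b => @posB_lt_of_neg_of_pos n _ hd a b
    have h3 := fun a b c => @posB_eq_of_neg_of_pos n _ hd a b c
    rcases hv with ⟨j, k, hjk, rfl | rfl⟩ | ⟨j, rfl⟩ <;>
      simp only [Pi.add_apply, Pi.sub_apply, eB_apply] at h1 h2 h3
    · -- At `k` the complement has coordinate `α_k + 1 ≤ 1`, so `k` is neither `i0` nor `i`.
      have hk0 : k ≠ i0 := by have := h1 k; grind
      have hki : k ≠ i := by have := h1 k; grind
      -- Otherwise the complement has `-1` at `j` and `1` at the larger index `k`.
      have hj : j = i0 ∨ j = i := by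
        by_contra hcon
        have := h2 j k
        grind
      rcases hj with rfl | rfl
      · rcases lt_or_gt_of_ne hki with h | h <;> grind
      · grind
    · by_cases hj0 : j = i0
      · subst hj0
        by_cases hki : k = i
        · grind
        · -- The complement is `e_i - e_k`, which is positive only for `i < k`.
          have := h2 k i
          grind
      · have hj0' := hpos j hj0
        by_cases hji : j = i
        · grind
        · by_cases hki : k = i
          · grind
          · -- The complement has `-1` at `j` and `1` at both `i0` and `i`.
            have := h3 j i0 i
            grind
    · by_cases hj0 : j = i0
      · simp [hj0]
      · by_cases hji : j = i
        · simp [hji]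
        · -- The complement has `-1` at `j` and `1` at both `i0` and `i`.
          have := h3 j i0 i
          grind
  · rintro ((((((( rfl | rfl | rfl) | ⟨s, hs, hsi, rfl⟩) | ⟨s, hs, hsi, rfl⟩) | ⟨s, hs, rfl⟩) |
      ⟨s, hs, rfl⟩) | ⟨s, hs, rfl⟩) | ⟨s, hs, rfl⟩)
    · exact ⟨add_mem_posB hi, Or.inr (sub_self _)⟩
    · exact mem_hook_of_add (eB_mem_posB _) (eB_mem_posB i) rfl
    · exact mem_hook_of_add (eB_mem_posB _) (eB_mem_posB i0) (by abel)
    · exact mem_hook_of_add (sub_mem_posB hs) (add_mem_posB hsi) (by abel)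
    · exact mem_hook_of_add (add_mem_posB hsi) (sub_mem_posB hs) (by abel)
    · exact mem_hook_of_add (add_mem_posB (hi.trans hs)) (sub_mem_posB hs) (by abel)
    · exact mem_hook_of_add (sub_mem_posB (hi.trans hs)) (add_mem_posB hs) (by abel)
    · exact mem_hook_of_add (sub_mem_posB hs) (add_mem_posB (hi.trans hs)) (by abel)
    · exact mem_hook_of_add (add_mem_posB hs) (sub_mem_posB (hi.trans hs)) (by abel)
end

section
/- Let α = e_1 + e_i with 1 < i ≤ n. Then: (a) n(α) and k(α) are normal patterns in Φ⁺; (b) n(α) = {e_1 + e_s : 1 < s < i} ∪ {2e_1}; and (c) k(α) = n(α) ∪ {e_r + e_s : 1 < r < s < i} ∪ {2e_r : 1 < r < i}. -/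
open RSP

/-- The standard basis vector `e_i` of `ℝⁿ`. -/
def eC (n : ℕ) (i : Fin n) : Fin n → ℝ := Pi.single i 1

/-- The positive roots of type `C_n`:
`{e_i - e_j, e_i + e_j : i < j} ∪ {2e_i}`. -/
def posC (n : ℕ) : Set (Fin n → ℝ) :=
  {v | ∃ i j : Fin n, i < j ∧ (v = eC n i - eC n j ∨ v = eC n i + eC n j)} ∪
    {v | ∃ i : Fin n, v = (2 : ℝ) • eC n i}

namespace TypeC

variable {n : ℕ}

/-- The set `A = {e_z + e_s : s < i}`, used with `z` the first index; `s = z` contributes `2e_z`. -/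
def setA (z i : Fin n) : Set (Fin n → ℝ) := {v | ∃ s, s < i ∧ v = eC n z + eC n s}

/-- The set `K = {e_r + e_s : r, s < i}`, with `r = s` allowed, which produces `2e_r`. -/
def setK (i : Fin n) : Set (Fin n → ℝ) := {v | ∃ r s, r < i ∧ s < i ∧ v = eC n r + eC n s}

lemma sum_eC (a : Fin n) : ∑ x, eC n a x = 1 := by simp [eC]

lemma eC_apply (a b : Fin n) : eC n a b = if b = a then 1 else 0 := by
  simp [eC, Pi.single_apply]

/-- Allowing equal and unordered indices in `e_a + e_b` merges the two families of roots with
coordinate sum `2`. -/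
lemma mem_posC {v : Fin n → ℝ} :
    v ∈ posC n ↔ (∃ a b, a < b ∧ v = eC n a - eC n b) ∨ ∃ a b, v = eC n a + eC n b := by
  constructor
  · rintro (⟨a, b, h, rfl | rfl⟩ | ⟨a, rfl⟩)
    · exact .inl ⟨a, b, h, rfl⟩
    · exact .inr ⟨a, b, rfl⟩
    · exact .inr ⟨a, a, two_smul _ _⟩
  · rintro (⟨a, b, h, rfl⟩ | ⟨a, b, rfl⟩)
    · exact .inl ⟨a, b, h, .inl rfl⟩
    · rcases lt_trichotomy a b with h | rfl | h
      · exact .inl ⟨a, b, h, .inr rfl⟩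
      · exact .inr ⟨a, (two_smul _ _).symm⟩
      · exact .inl ⟨b, a, h, .inr (add_comm _ _)⟩

lemma sub_mem {a b : Fin n} (h : a < b) : eC n a - eC n b ∈ posC n :=
  mem_posC.2 (.inl ⟨a, b, h, rfl⟩)

lemma add_mem (a b : Fin n) : eC n a + eC n b ∈ posC n := mem_posC.2 (.inr ⟨a, b, rfl⟩)

/-- Adding a positive root to `e_r + e_s` can only lower one of the two indices. -/
lemma add_sum_cases {r s : Fin n} {c : Fin n → ℝ} (hc : c ∈ posC n)
    (h : eC n r + eC n s + c ∈ posC n) :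
    (∃ t, t < r ∧ c = eC n t - eC n r) ∨ ∃ t, t < s ∧ c = eC n t - eC n s := by
  rcases mem_posC.1 hc with ⟨a, b, hab, rfl⟩ | ⟨a, b, rfl⟩
  · rcases mem_posC.1 h with ⟨p, q, -, e⟩ | ⟨p, q, e⟩
    · have := congrArg (fun v : Fin n → ℝ => ∑ x, v x) e
      simp [Finset.sum_add_distrib, Finset.sum_sub_distrib, sum_eC] at this
    · -- The coordinate `b` is nonnegative on the right, so `b` must occur among `r`, `s`.
      have e' := congrFun e b
      simp only [Pi.add_apply, Pi.sub_apply, eC_apply, if_neg hab.ne', if_true] at e'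
      by_cases h1 : b = r
      · subst h1; exact .inl ⟨a, hab, rfl⟩
      by_cases h2 : b = s
      · subst h2; exact .inr ⟨a, hab, rfl⟩
      rw [if_neg h1, if_neg h2] at e'
      exfalso
      split_ifs at e' <;> linarith
  · exfalso
    rcases mem_posC.1 h with ⟨p, q, -, e⟩ | ⟨p, q, e⟩ <;>
    · have := congrArg (fun v : Fin n → ℝ => ∑ x, v x) e
      simp [Finset.sum_add_distrib, Finset.sum_sub_distrib, sum_eC] at this

/-- A sum involving the index `i` is not in `K`: all elements of `K` vanish at coordinate `i`. -/
lemma add_notMem_K (a i : Fin n) : eC n a + eC n i ∉ setK i := by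
  rintro ⟨r, s, hr, hs, e⟩
  have e' := congrFun e i
  simp only [Pi.add_apply, eC_apply, if_neg hr.ne', if_neg hs.ne', if_true] at e'
  split_ifs at e' <;> linarith

lemma A_subset_K {z i : Fin n} (hi : z < i) : setA z i ⊆ setK i := by
  rintro v ⟨s, hs, rfl⟩
  exact ⟨z, s, hi, hs, rfl⟩

/-- If `z` is the first index, adding a positive root to `e_z + e_s` lowers `s`. -/
lemma add_mem_A {z s i : Fin n} (hz : (z : ℕ) = 0) (hs : s ≤ i) {c : Fin n → ℝ}
    (hc : c ∈ posC n) (h : eC n z + eC n s + c ∈ posC n) :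
    eC n z + eC n s + c ∈ setA z i := by
  rcases add_sum_cases hc h with ⟨t, ht, rfl⟩ | ⟨t, ht, rfl⟩
  · rw [Fin.lt_def] at ht; omega
  · exact ⟨t, ht.trans_le hs, by abel⟩

lemma normal_A {z i : Fin n} (hz : (z : ℕ) = 0) : NormalPattern (posC n) (setA z i) := by
  constructor
  · rintro v ⟨s, -, rfl⟩
    exact add_mem z s
  · rintro c hc v ⟨s, hs, rfl⟩ h
    rw [add_comm] at h ⊢
    exact add_mem_A hz hs.le hc h

lemma normal_K (i : Fin n) : NormalPattern (posC n) (setK i) := by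
  constructor
  · rintro v ⟨r, s, -, -, rfl⟩
    exact add_mem r s
  · rintro c hc v ⟨r, s, hr, hs, rfl⟩ h
    rw [add_comm] at h ⊢
    rcases add_sum_cases hc h with ⟨t, ht, rfl⟩ | ⟨t, ht, rfl⟩
    · exact ⟨t, s, ht.trans hr, hs, by abel⟩
    · exact ⟨r, t, hr, ht.trans hs, by abel⟩

lemma nSet_eq {z i : Fin n} (hz : (z : ℕ) = 0) :
    nSet (posC n) (eC n z + eC n i) = setA z i := by
  apply Set.Subset.antisymm
  · refine Set.iUnion_subset fun m => ?_
    induction m with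
    | zero =>
      rintro v ⟨hv, b, rfl, c, hc, rfl⟩
      exact add_mem_A hz le_rfl hc hv
    | succ m ih =>
      rintro v ⟨hv, b, hb, c, hc, rfl⟩
      obtain ⟨s, hs, rfl⟩ := ih hb
      exact add_mem_A hz hs.le hc hv
  · rintro v ⟨s, hs, rfl⟩
    exact Set.mem_iUnion.2
      ⟨0, add_mem z s, _, rfl, eC n s - eC n i, sub_mem hs, by abel⟩

lemma rz_subset_K {z i : Fin n} (hz : (z : ℕ) = 0) {N : Set (Fin n → ℝ)} (hN : N ⊆ setK i) :
    rzSet (posC n) N \ {eC n z + eC n i} ⊆ setK i := by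
  rintro v ⟨⟨⟨hv, -⟩, hrz⟩, hne⟩
  have key : ∀ c ∈ posC n, ∀ a, v + c ≠ eC n a + eC n i := by
    intro c hc a e
    rcases hrz c hc with h | h
    · exact h (e ▸ add_mem a i)
    · exact add_notMem_K a i (e ▸ hN h)
  have small : ∀ a b, v = eC n a + eC n b → b < i := by
    rintro a b rfl
    by_contra! hb
    rcases hb.lt_or_eq with hb | rfl
    · exact key _ (sub_mem hb) a (by abel)
    · have haz : a ≠ z := by rintro rfl; exact hne rfl
      have hza : z < a := by
        rw [Fin.lt_def]
        have : (a : ℕ) ≠ z := fun h => haz (Fin.ext h)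
        omega
      exact key _ (sub_mem hza) z (by abel)
  rcases mem_posC.1 hv with ⟨a, b, -, rfl⟩ | ⟨a, b, rfl⟩
  · exact absurd (by abel) (key _ (add_mem b i) a)
  · exact ⟨a, b, small b a (add_comm _ _), small a b rfl, rfl⟩

lemma kIter_subset_K {z i : Fin n} (hz : (z : ℕ) = 0) (hi : z < i) (m : ℕ) :
    kIter (posC n) (eC n z + eC n i) m ⊆ setK i := by
  induction m with
  | zero => exact (nSet_eq hz).trans_subset (A_subset_K hi)
  | succ m ih => exact Set.union_subset (rz_subset_K hz ih) ih

/-- The (zero-based) index sum bounds the stage at which `e_r + e_s` enters the iteration. -/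
lemma mem_kIter {z i : Fin n} (hz : (z : ℕ) = 0) (m : ℕ) :
    ∀ r s : Fin n, r < i → s < i → (r : ℕ) + s ≤ m →
      eC n r + eC n s ∈ kIter (posC n) (eC n z + eC n i) m := by
  induction m with
  | zero =>
    intro r s _ hs h
    have hr : r = z := Fin.ext (by omega)
    subst hr
    exact (nSet_eq hz).superset ⟨s, hs, rfl⟩
  | succ m ih =>
    intro r s hr hs h
    by_cases hmem : eC n r + eC n s ∈ kIter (posC n) (eC n z + eC n i) m
    · exact .inr hmem
    refine .inl ⟨⟨⟨add_mem r s, hmem⟩, fun c hc => ?_⟩, ?_⟩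
    · refine or_iff_not_imp_left.2 fun hsum => ?_
      rcases add_sum_cases hc (not_not.1 hsum) with ⟨t, ht, rfl⟩ | ⟨t, ht, rfl⟩
      · have e : eC n r + eC n s + (eC n t - eC n r) = eC n t + eC n s := by abel
        rw [e]
        exact ih t s (ht.trans hr) hs (by rw [Fin.lt_def] at ht; omega)
      · have e : eC n r + eC n s + (eC n t - eC n s) = eC n r + eC n t := by abel
        rw [e]
        exact ih r t hr (ht.trans hs) (by rw [Fin.lt_def] at ht; omega)
    · intro e
      exact add_notMem_K z i (Set.mem_singleton_iff.1 e ▸ ⟨r, s, hr, hs, rfl⟩)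

lemma kSet_eq {z i : Fin n} (hz : (z : ℕ) = 0) (hi : z < i) :
    kSet (posC n) (eC n z + eC n i) = setK i := by
  apply Set.Subset.antisymm
  · exact Set.iUnion_subset fun m => kIter_subset_K hz hi m
  · rintro v ⟨r, s, hr, hs, rfl⟩
    exact Set.mem_iUnion.2 ⟨r + s, mem_kIter hz _ r s hr hs le_rfl⟩

lemma eq_or_lt {z : Fin n} (hz : (z : ℕ) = 0) (a : Fin n) : a = z ∨ z < a := by
  rw [Fin.lt_def, Fin.ext_iff]; omega

end TypeC

open TypeC

/-- type `C_n`.  For `α = e_1 + e_i` (with `e_1 = e i₀`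
the first coordinate vector and `1 < i`):
(a) `n(α)` and `k(α)` are normal patterns in `Φ⁺`;
(b) `n(α) = {e_1 + e_s : 1 < s < i} ∪ {2e_1}`;
(c) `k(α) = n(α) ∪ {e_r + e_s : 1 < r < s < i} ∪ {2e_r : 1 < r < i}`. -/
theorem typeC_n_k
    (n : ℕ) (hn : 3 ≤ n) (i0 i : Fin n) (h0 : (i0 : ℕ) = 0) (hi : i0 < i) :
    NormalPattern (posC n) (nSet (posC n) (eC n i0 + eC n i)) ∧
    NormalPattern (posC n) (kSet (posC n) (eC n i0 + eC n i)) ∧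
    nSet (posC n) (eC n i0 + eC n i) =
      {v | ∃ s : Fin n, i0 < s ∧ s < i ∧ v = eC n i0 + eC n s} ∪
        {(2 : ℝ) • eC n i0} ∧
    kSet (posC n) (eC n i0 + eC n i) =
      nSet (posC n) (eC n i0 + eC n i) ∪
        {v | ∃ r s : Fin n, i0 < r ∧ r < s ∧ s < i ∧ v = eC n r + eC n s} ∪
        {v | ∃ r : Fin n, i0 < r ∧ r < i ∧ v = (2 : ℝ) • eC n r} := by
  rw [kSet_eq h0 hi, nSet_eq h0]
  refine ⟨normal_A h0, normal_K i, ?_, ?_⟩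
  · ext v
    constructor
    · rintro ⟨s, hs, rfl⟩
      rcases eq_or_lt h0 s with rfl | h
      · exact .inr (two_smul _ _).symm
      · exact .inl ⟨s, h, hs, rfl⟩
    · rintro (⟨s, -, hs, rfl⟩ | rfl)
      · exact ⟨s, hs, rfl⟩
      · exact ⟨i0, hi, two_smul _ _⟩
  · ext v
    constructor
    · rintro ⟨r, s, hr, hs, rfl⟩
      rcases eq_or_lt h0 r with rfl | hr0
      · exact .inl (.inl ⟨s, hs, rfl⟩)
      rcases eq_or_lt h0 s with rfl | hs0
      · exact .inl (.inl ⟨r, hr, add_comm _ _⟩)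
      rcases lt_trichotomy r s with h | rfl | h
      · exact .inl (.inr ⟨r, s, hr0, h, hs, rfl⟩)
      · exact .inr ⟨r, hr0, hr, (two_smul _ _).symm⟩
      · exact .inl (.inr ⟨s, r, hs0, h, hr, add_comm _ _⟩)
    · rintro ((h | ⟨r, s, -, hrs, hs, rfl⟩) | ⟨r, -, hr, rfl⟩)
      · exact A_subset_K hi h
      · exact ⟨r, s, hrs.trans hs, hs, rfl⟩
      · exact ⟨r, r, hr, hr, two_smul _ _⟩
end
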